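/- Let (a_n) be a sequence of complex numbers with Σ |a_n| < ∞, a_1 ≠ 0, and suppose the Dirichlet series f(s) = Σ_{n=1}^∞ a_n n^{-s} satisfies |f(s)| ≥ δ > 0 for all s with Re(s) ≥ 0. Then there exists a sequence (b_n) with Σ |b_n| < ∞ such that 1/f(s) = Σ_{n=1}^∞ b_n n^{-s} for all s with Re(s) ≥ 0. -/

import Mathlib

noncomputable section

open Filter Topology LSeries

open scoped ComplexConjugate

/-- At `s = 0`, the terms of the L-series of an arithmetic function are its values. -/
lemma ArithmeticFunction.term_zero_right (f : ArithmeticFunction ℂ) : term f 0 = f := by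
  ext n
  rcases eq_or_ne n 0 with rfl | hn
  · simp
  · simp [term_of_ne_zero hn]

lemma ArithmeticFunction.lseriesSummable_zero_iff (f : ArithmeticFunction ℂ) :
    LSeriesSummable f 0 ↔ Summable f := by
  rw [LSeriesSummable, f.term_zero_right]

/-- The ring of absolutely summable complex arithmetic functions under Dirichlet convolution. -/
def summableArithmeticFunction : Subring (ArithmeticFunction ℂ) where
  carrier := {f | LSeriesSummable f 0}
  mul_mem' {f g} hf hg := by
    simpa [ArithmeticFunction.coe_mul] using LSeriesSummable.convolution hf hg
  one_mem' := by
    rw [Set.mem_ofPred_eq, ArithmeticFunction.lseriesSummable_zero_iff]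
    exact summable_of_ne_finset_zero (s := {1}) fun n hn ↦
      ArithmeticFunction.one_apply_ne (by simpa using hn)
  add_mem' {f g} hf hg := by
    have := hf.add hg
    rwa [show (f : ℕ → ℂ) + g = ⇑(f + g) from rfl] at this
  zero_mem' := by
    rw [Set.mem_ofPred_eq, ArithmeticFunction.lseriesSummable_zero_iff]
    exact summable_zero
  neg_mem' {f} hf := by
    have := hf.neg
    rwa [show -(f : ℕ → ℂ) = ⇑(-f) from rfl] at this

namespace summableArithmeticFunction

local notation "𝒜" => summableArithmeticFunction

lemma summable_norm (f : 𝒜) : Summable fun n ↦ ‖f.1 n‖ :=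
  (f.1.lseriesSummable_zero_iff.mp f.2).norm

lemma lseriesSummable (f : 𝒜) {s : ℂ} (hs : 0 ≤ s.re) : LSeriesSummable f.1 s :=
  LSeriesSummable.of_re_le_re (by simpa using hs) f.2

/-- The inclusion of the convolution ring into the sequence space `ℓ¹`. -/
def toLp : 𝒜 →+ lp (fun _ : ℕ ↦ ℂ) 1 where
  toFun f := ⟨fun n ↦ f.1 n, memℓp_gen (by simpa using summable_norm f)⟩
  map_zero' := rfl
  map_add' _ _ := rfl

lemma toLp_apply (f : 𝒜) (n : ℕ) : toLp f n = f.1 n := rfl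

lemma toLp_injective : Function.Injective toLp := fun _ _ h ↦
  Subtype.ext <| ArithmeticFunction.ext fun n ↦ congrArg (fun x ↦ x n) h

instance : NormedAddCommGroup 𝒜 := NormedAddCommGroup.induced _ _ toLp toLp_injective

lemma norm_eq_tsum (f : 𝒜) : ‖f‖ = ∑' n, ‖f.1 n‖ := by
  change ‖toLp f‖ = _
  rw [lp.norm_eq_tsum_rpow (by simp)]
  simp [toLp_apply]

lemma norm_mul_le (f g : 𝒜) : ‖f * g‖ ≤ ‖f‖ * ‖g‖ := by
  have key (h : 𝒜) : LSeriesHasSum (fun n ↦ (‖h.1 n‖ : ℂ)) 0 (‖h‖ : ℂ) := by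
    have : term (fun n ↦ (‖h.1 n‖ : ℂ)) 0 = fun n ↦ (‖h.1 n‖ : ℂ) := by
      ext n
      rcases eq_or_ne n 0 with rfl | hn
      · simp
      · simp [term_of_ne_zero hn]
    rw [LSeriesHasSum, this, norm_eq_tsum, Complex.hasSum_ofReal]
    exact (summable_norm h).hasSum
  have hconv := (key f).convolution (key g)
  have hterm : term (convolution (fun n ↦ (‖f.1 n‖ : ℂ)) fun n ↦ (‖g.1 n‖ : ℂ)) 0 =
      fun n ↦ ((∑ p ∈ n.divisorsAntidiagonal, ‖f.1 p.1‖ * ‖g.1 p.2‖ : ℝ) : ℂ) := by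
    ext n
    rcases eq_or_ne n 0 with rfl | hn
    · simp
    · simp [term_of_ne_zero hn, convolution_def]
  rw [LSeriesHasSum, hterm, ← Complex.ofReal_mul, Complex.hasSum_ofReal] at hconv
  rw [norm_eq_tsum (f * g)]
  refine (Summable.tsum_le_tsum (fun n ↦ ?_) (summable_norm (f * g)) hconv.summable).trans
    hconv.tsum_eq.le
  change ‖(f.1 * g.1) n‖ ≤ _
  rw [ArithmeticFunction.mul_apply]
  exact (norm_sum_le _ _).trans_eq (by simp)

instance : NormedCommRing 𝒜 where
  __ := (inferInstance : CommRing 𝒜)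
  __ := (inferInstance : NormedAddCommGroup 𝒜)
  norm_mul_le := norm_mul_le

instance : NormOneClass 𝒜 where
  norm_one := by
    rw [norm_eq_tsum, tsum_eq_single 1]
    · simp
    · intro n hn
      simp [ArithmeticFunction.one_apply_ne hn]

instance : CompleteSpace 𝒜 := by
  have hiso : Isometry (toLp : 𝒜 → lp (fun _ : ℕ ↦ ℂ) 1) :=
    AddMonoidHomClass.isometry_of_norm toLp fun _ ↦ rfl
  rw [completeSpace_iff_isComplete_range hiso.isUniformInducing]
  have hrange : Set.range (toLp : 𝒜 → lp (fun _ : ℕ ↦ ℂ) 1) = {x | x 0 = 0} := by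
    ext x
    constructor
    · rintro ⟨f, rfl⟩
      exact f.1.map_zero
    · intro hx
      refine ⟨⟨⟨fun n ↦ x n, hx⟩, ?_⟩, rfl⟩
      refine (ArithmeticFunction.lseriesSummable_zero_iff _).mpr (Summable.of_norm ?_)
      simpa using (lp.memℓp x).summable (by simp)
  rw [hrange]
  refine (isClosed_singleton.preimage (f := fun x : lp (fun _ : ℕ ↦ ℂ) 1 ↦ x 0) ?_).isComplete
  have := (lp.uniformContinuous_coe (E := fun _ : ℕ ↦ ℂ) (p := 1)).continuous
  exact (continuous_apply 0).comp this

lemma lseries_mul (f g : 𝒜) {s : ℂ} (hs : 0 ≤ s.re) :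
    LSeries (f * g : 𝒜).1 s = LSeries f.1 s * LSeries g.1 s :=
  ArithmeticFunction.LSeries_mul' (lseriesSummable f hs) (lseriesSummable g hs)

lemma lseries_sub (f g : 𝒜) {s : ℂ} (hs : 0 ≤ s.re) :
    LSeries (f - g : 𝒜).1 s = LSeries f.1 s - LSeries g.1 s :=
  LSeries_sub (lseriesSummable f hs) (lseriesSummable g hs)

lemma lseries_one (s : ℂ) : LSeries (1 : 𝒜).1 s = 1 := by
  have h : ⇑(1 : 𝒜).1 = delta := by
    ext n
    simp [ArithmeticFunction.one_apply, delta]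
  rw [h, LSeries_delta, Pi.one_apply]

lemma norm_lseries_le (f : 𝒜) {s : ℂ} (hs : 0 ≤ s.re) : ‖LSeries f.1 s‖ ≤ ‖f‖ := by
  rw [norm_eq_tsum]
  refine tsum_of_norm_bounded (summable_norm f).hasSum fun n ↦ ?_
  simpa [f.1.term_zero_right] using norm_term_le_of_re_le_re f.1 (s := 0) (by simpa using hs) n


/-- The Cesàro means of the powers of a unimodular number tend to `1` or `0`. -/
lemma tendsto_cesaro_pow {w : ℂ} (hw : ‖w‖ = 1) :
    Tendsto (fun K : ℕ ↦ (K : ℂ)⁻¹ * ∑ k ∈ Finset.range K, w ^ k) atTop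
      (𝓝 (if w = 1 then 1 else 0)) := by
  split_ifs with h
  · subst h
    refine tendsto_const_nhds.congr' ?_
    filter_upwards [eventually_ne_atTop 0] with K hK
    simp [hK]
  · have hw1 : w - 1 ≠ 0 := sub_ne_zero.mpr h
    refine squeeze_zero_norm (a := fun K : ℕ ↦ (K : ℝ)⁻¹ * (2 / ‖w - 1‖)) (fun K ↦ ?_) ?_
    · rw [norm_mul, norm_inv, Complex.norm_natCast, geom_sum_eq h, norm_div]
      gcongr
      refine (norm_sub_le _ _).trans ?_
      simp [hw]
      norm_num
    · simpa using (tendsto_inv_atTop_nhds_zero_nat (𝕜 := ℝ)).mul_const (2 / ‖w - 1‖)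

/-- Bessel's inequality for exponential sums with distinct frequencies. -/
lemma sum_norm_sq_le_of_exponential_sum_le {ι : Type*} (F : Finset ι) (c z : ι → ℂ)
    (hz : ∀ i ∈ F, ‖z i‖ = 1) (hinj : Set.InjOn z F) {M : ℝ}
    (hM : ∀ k : ℕ, ‖∑ i ∈ F, c i * z i ^ k‖ ≤ M) :
    ∑ i ∈ F, ‖c i‖ ^ 2 ≤ M ^ 2 := by
  classical
  have hM0 : 0 ≤ M := (norm_nonneg _).trans (hM 0)
  set D : ℕ → ℂ := fun k ↦ ∑ i ∈ F, c i * z i ^ k with hD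
  have hone {i j : ι} (hi : i ∈ F) (hj : j ∈ F) : z i * conj (z j) = 1 ↔ i = j := by
    have hjj : z j * conj (z j) = 1 := by simp [Complex.mul_conj', hz j hj]
    have hne : conj (z j) ≠ 0 := right_ne_zero_of_mul_eq_one hjj
    rw [← hjj, mul_left_inj' hne]
    exact ⟨fun h ↦ hinj hi hj h, fun h ↦ h ▸ rfl⟩
  have hlim : Tendsto (fun K : ℕ ↦ (K : ℂ)⁻¹ * ∑ k ∈ Finset.range K, D k * conj (D k)) atTop
      (𝓝 ((∑ i ∈ F, ‖c i‖ ^ 2 : ℝ) : ℂ)) := by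
    have hexp : (fun K : ℕ ↦ (K : ℂ)⁻¹ * ∑ k ∈ Finset.range K, D k * conj (D k)) = fun K : ℕ ↦
        ∑ i ∈ F, ∑ j ∈ F, c i * conj (c j) *
          ((K : ℂ)⁻¹ * ∑ k ∈ Finset.range K, (z i * conj (z j)) ^ k) := by
      ext K
      simp only [hD, map_sum, Finset.sum_mul_sum]
      simp only [Finset.mul_sum]
      rw [Finset.sum_comm]
      refine Finset.sum_congr rfl fun i _ ↦ ?_
      rw [Finset.sum_comm]
      refine Finset.sum_congr rfl fun j _ ↦ Finset.sum_congr rfl fun k _ ↦ ?_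
      simp only [map_mul, map_pow, mul_pow]
      ring
    have hval : ((∑ i ∈ F, ‖c i‖ ^ 2 : ℝ) : ℂ) = ∑ i ∈ F, ∑ j ∈ F, c i * conj (c j) *
        (if z i * conj (z j) = 1 then 1 else 0) := by
      rw [Complex.ofReal_sum]
      refine Finset.sum_congr rfl fun i hi ↦ ?_
      rw [Finset.sum_eq_single_of_mem i hi]
      · rw [if_pos ((hone hi hi).mpr rfl), mul_one, Complex.mul_conj', Complex.ofReal_pow]
      · intro j hj hji
        rw [if_neg fun h ↦ hji ((hone hi hj).mp h).symm, mul_zero]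
    rw [hexp, hval]
    refine tendsto_finsetSum _ fun i hi ↦ tendsto_finsetSum _ fun j hj ↦ ?_
    exact (tendsto_cesaro_pow (by simp [hz i hi, hz j hj])).const_mul _
  have hle : ‖((∑ i ∈ F, ‖c i‖ ^ 2 : ℝ) : ℂ)‖ ≤ M ^ 2 := by
    refine le_of_tendsto' hlim.norm fun K ↦ ?_
    rw [norm_mul, norm_inv, Complex.norm_natCast]
    refine inv_mul_le_of_le_mul₀ (by positivity) (by positivity) ?_
    refine (norm_sum_le_of_le _ (n := fun _ ↦ M ^ 2) fun k _ ↦ ?_).trans_eq (by simp)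
    rw [norm_mul, Complex.norm_conj, ← sq]
    exact pow_le_pow_left₀ (norm_nonneg _) (hM k) 2
  exact (le_abs_self _).trans (by simpa [-Complex.ofReal_sum] using hle)

/-- The coefficients of a Dirichlet polynomial bounded by `M` on the imaginary axis have
`ℓ²`-norm at most `M`. -/
lemma sum_norm_sq_le_of_dirichletPolynomial_le (F : Finset ℕ) (c : ℕ → ℂ) {M : ℝ}
    (hF : ∀ n ∈ F, n ≠ 0)
    (hM : ∀ t : ℝ, ‖∑ n ∈ F, term c (t * Complex.I) n‖ ≤ M) :
    ∑ n ∈ F, ‖c n‖ ^ 2 ≤ M ^ 2 := by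
  set h : ℝ := ((F.sup id : ℕ) + 1 : ℝ)⁻¹
  have hpos : 0 < h := by positivity
  have harg (n : ℕ) (hn : n ∈ F) : 0 ≤ h * Real.log n ∧ h * Real.log n ≤ 1 := by
    refine ⟨mul_nonneg hpos.le (Real.log_natCast_nonneg n), ?_⟩
    refine inv_mul_le_of_le_mul₀ (by positivity) zero_le_one ?_
    have h1 : (n : ℝ) ≤ (F.sup id : ℕ) := by exact_mod_cast Finset.le_sup (f := id) hn
    have h2 := Real.log_le_self (Nat.cast_nonneg (α := ℝ) n)
    linarith
  refine sum_norm_sq_le_of_exponential_sum_le F c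
    (fun n ↦ Complex.exp ((h * Real.log n : ℝ) * Complex.I)) (fun n _ ↦ ?_) ?_ fun k ↦ ?_
  · exact Complex.norm_exp_ofReal_mul_I _
  · intro m hm n hn hmn
    have := Complex.exp_inj_of_neg_pi_lt_of_le_pi (by
        simp only [Complex.mul_I_im, Complex.ofReal_re]
        linarith [Real.pi_pos, (harg m hm).1]) (by
        simp only [Complex.mul_I_im, Complex.ofReal_re]
        linarith [Real.pi_gt_three, (harg m hm).2]) (by
        simp only [Complex.mul_I_im, Complex.ofReal_re]
        linarith [Real.pi_pos, (harg n hn).1]) (by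
        simp only [Complex.mul_I_im, Complex.ofReal_re]
        linarith [Real.pi_gt_three, (harg n hn).2]) hmn
    have hlog : Real.log m = Real.log n := by
      have := congrArg Complex.im this
      simp only [Complex.mul_I_im, Complex.ofReal_re] at this
      exact mul_left_cancel₀ hpos.ne' this
    exact_mod_cast Real.log_injOn_pos
      (show (0 : ℝ) < m by exact_mod_cast Nat.pos_of_ne_zero (hF m hm))
      (show (0 : ℝ) < n by exact_mod_cast Nat.pos_of_ne_zero (hF n hn)) hlog
  · convert! hM (-(k * h)) using 3 with n hn
    rw [term_of_ne_zero (hF n hn), div_eq_mul_inv, ← Complex.cpow_neg,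
      Complex.cpow_def_of_ne_zero (by exact_mod_cast hF n hn), ← Complex.exp_nat_mul,
      ← Complex.natCast_log]
    congr 2
    push_cast
    ring

lemma card_divisors_pow_le {q : ℕ} (hq : q ≠ 0) (k : ℕ) :
    (q ^ k).divisors.card ≤ q.divisors.card * (k + 1) ^ q.primeFactors.card := by
  rcases eq_or_ne k 0 with rfl | hk
  · simp [Nat.one_le_iff_ne_zero, hq]
  rw [Nat.card_divisors (pow_ne_zero k hq), Nat.card_divisors hq, Nat.primeFactors_pow q hk,
    ← Finset.prod_const, ← Finset.prod_mul_distrib]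
  refine Finset.prod_le_prod' fun p _ ↦ ?_
  simp only [Nat.factorization_pow, Finsupp.smul_apply, smul_eq_mul]
  nlinarith

lemma dvd_pow_of_pow_apply_ne_zero {f : ArithmeticFunction ℂ} {q : ℕ}
    (hf : ∀ n, f n ≠ 0 → n ∣ q) (k : ℕ) : ∀ n, (f ^ k) n ≠ 0 → n ∣ q ^ k := by
  induction k with
  | zero =>
    intro n hn
    by_contra h
    exact hn (ArithmeticFunction.one_apply_ne (by simpa using h))
  | succ k ih =>
    intro n hn
    rw [pow_succ, ArithmeticFunction.mul_apply] at hn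
    obtain ⟨p, hp, hne⟩ := Finset.exists_ne_zero_of_sum_ne_zero hn
    rw [← (Nat.mem_divisorsAntidiagonal.mp hp).1, pow_succ]
    exact mul_dvd_mul (ih _ (left_ne_zero_of_mul hne)) (hf _ (right_ne_zero_of_mul hne))

lemma lseries_pow (f : 𝒜) {s : ℂ} (hs : 0 ≤ s.re) (k : ℕ) :
    LSeries (f ^ k : 𝒜).1 s = LSeries f.1 s ^ k := by
  induction k with
  | zero => simpa using lseries_one s
  | succ k ih => rw [pow_succ, lseries_mul _ _ hs, ih, pow_succ]

/-- The powers of a Dirichlet polynomial bounded by `M` on the imaginary axis grow at most like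
`M ^ k`, up to a polynomial factor, in `ℓ¹`-norm. -/
lemma norm_pow_le_of_lseries_le {f : 𝒜} {q : ℕ} (hq : q ≠ 0) (hf : ∀ n, f.1 n ≠ 0 → n ∣ q)
    {M : ℝ} (hM : ∀ t : ℝ, ‖LSeries f.1 (t * Complex.I)‖ ≤ M) (k : ℕ) :
    ‖f ^ k‖ ≤ q.divisors.card * ((k : ℝ) + 1) ^ q.primeFactors.card * M ^ k := by
  have hM0 : 0 ≤ M := (norm_nonneg _).trans (hM 0)
  set F := (q ^ k).divisors
  have hne : ∀ n ∈ F, n ≠ 0 := fun n hn ↦ (Nat.pos_of_mem_divisors hn).ne'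
  have hsupp : ∀ n ∉ F, (f ^ k : 𝒜).1 n = 0 := fun n hn ↦ by
    by_contra h
    exact hn (Nat.mem_divisors.mpr ⟨dvd_pow_of_pow_apply_ne_zero hf k n h, pow_ne_zero k hq⟩)
  have hsq : ∑ n ∈ F, ‖(f ^ k : 𝒜).1 n‖ ^ 2 ≤ (M ^ k) ^ 2 := by
    refine sum_norm_sq_le_of_dirichletPolynomial_le F _ hne fun t ↦ ?_
    have hre : 0 ≤ (t * Complex.I).re := by simp
    have hsum : LSeries (f ^ k : 𝒜).1 (t * Complex.I) =
        ∑ n ∈ F, term (f ^ k : 𝒜).1 (t * Complex.I) n :=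
      tsum_eq_sum fun n hn ↦ by rw [term_def, hsupp n hn, zero_div, ite_self]
    rw [← hsum, lseries_pow f hre, norm_pow]
    exact pow_le_pow_left₀ (norm_nonneg _) (hM t) k
  have hcard : (1 : ℝ) ≤ F.card := by
    exact_mod_cast Finset.card_pos.mpr (Nat.nonempty_divisors.mpr (pow_ne_zero k hq))
  have hnorm : ‖f ^ k‖ ≤ F.card * M ^ k := by
    rw [norm_eq_tsum, tsum_eq_sum (s := F) fun n hn ↦ by rw [hsupp n hn, norm_zero]]
    refine (sq_le_sq₀ (by positivity) (by positivity)).mp ?_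
    calc (∑ n ∈ F, ‖(f ^ k : 𝒜).1 n‖) ^ 2
        ≤ F.card * ∑ n ∈ F, ‖(f ^ k : 𝒜).1 n‖ ^ 2 := sq_sum_le_card_mul_sum_sq
      _ ≤ F.card * (M ^ k) ^ 2 := by gcongr
      _ ≤ (F.card * M ^ k) ^ 2 := by
        rw [mul_pow]
        gcongr
        exact le_self_pow₀ hcard two_ne_zero
  refine hnorm.trans ?_
  gcongr
  exact_mod_cast card_divisors_pow_le hq k

/-- Dirichlet polynomials are dense in `ℓ¹`. -/
lemma exists_norm_sub_lt (f : 𝒜) {ε : ℝ} (hε : 0 < ε) :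
    ∃ (g : 𝒜) (q : ℕ), q ≠ 0 ∧ (∀ n, g.1 n ≠ 0 → n ∣ q) ∧ ‖f - g‖ < ε := by
  classical
  obtain ⟨F, hF⟩ := ((tendsto_tsum_compl_atTop_zero fun n ↦ ‖f.1 n‖).eventually_lt_const hε).exists
  let g : ArithmeticFunction ℂ := ⟨fun n ↦ if n ∈ F then f.1 n else 0, by simp⟩
  have hg : LSeriesSummable g 0 := g.lseriesSummable_zero_iff.mpr <|
    summable_of_ne_finset_zero (s := F) fun n hn ↦ if_neg hn
  refine ⟨⟨g, hg⟩, ∏ n ∈ F.erase 0, n, Finset.prod_ne_zero_iff.mpr fun n hn ↦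
    Finset.ne_of_mem_erase hn, fun n hn ↦ Finset.dvd_prod_of_mem _ ?_, ?_⟩
  · have hnF : n ∈ F := by
      by_contra h
      exact hn (if_neg h)
    refine Finset.mem_erase.mpr ⟨?_, hnF⟩
    rintro rfl
    exact hn g.map_zero
  · rw [norm_eq_tsum]
    refine lt_of_eq_of_lt ?_ hF
    refine (tsum_congr fun n ↦ ?_).trans
      (tsum_subtype {n | n ∉ F} (fun n ↦ ‖f.1 n‖)).symm
    change ‖f.1 n - (if n ∈ F then f.1 n else 0)‖ = _
    by_cases h : n ∈ F <;> simp [h]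

/-- If the Dirichlet series of `f` is bounded by a constant less than `1` on the imaginary axis,
then `1 - f` is invertible in `ℓ¹`. -/
lemma isUnit_one_sub_of_lseries_le (f : 𝒜) {M : ℝ} (hM1 : M < 1)
    (hM : ∀ t : ℝ, ‖LSeries f.1 (t * Complex.I)‖ ≤ M) : IsUnit (1 - f) := by
  obtain ⟨g, q, hq, hsupp, hfg⟩ := exists_norm_sub_lt f (ε := (1 - M) / 3) (by linarith)
  set ε := (1 - M) / 3
  have hg (t : ℝ) : ‖LSeries g.1 (t * Complex.I)‖ ≤ M + ε := by
    have hre : 0 ≤ (t * Complex.I).re := by simp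
    have h := (norm_lseries_le (f - g) hre).trans hfg.le
    rw [lseries_sub f g hre] at h
    have := norm_sub_norm_le (LSeries g.1 (t * Complex.I)) (LSeries f.1 (t * Complex.I))
    rw [norm_sub_rev] at this
    linarith [hM t]
  set C : ℝ := (q.divisors.card : ℝ)
  set m := q.primeFactors.card
  set r := M + ε + ε with hr
  have hr0 : 0 ≤ r := (add_nonneg ((norm_nonneg _).trans (hg 0)) ((norm_nonneg _).trans hfg.le))
  have hr1 : r < 1 := by simp only [hr, ε]; linarith
  have hbound (k : ℕ) : ‖f ^ k‖ ≤ C * ((k : ℝ) + 1) ^ m * r ^ k := by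
    rw [← add_sub_cancel g f, add_pow, hr, add_pow (M + ε), Finset.mul_sum]
    refine norm_sum_le_of_le _ fun j hj ↦ ?_
    have hjk : (j : ℝ) ≤ k := by exact_mod_cast Finset.mem_range_succ_iff.mp hj
    have hgj := norm_pow_le_of_lseries_le hq hsupp hg j
    have hMε : 0 ≤ M + ε := (norm_nonneg _).trans (hg 0)
    calc ‖g ^ j * (f - g) ^ (k - j) * (k.choose j : 𝒜)‖
        ≤ ‖g ^ j‖ * ‖f - g‖ ^ (k - j) * k.choose j := by
          refine (norm_mul_le _ _).trans ?_
          gcongr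
          · exact (norm_mul_le _ _).trans (by gcongr; exact norm_pow_le _ _)
          · simpa using Nat.norm_cast_le (α := 𝒜) (k.choose j)
      _ ≤ (C * ((k : ℝ) + 1) ^ m * (M + ε) ^ j) * ε ^ (k - j) * k.choose j := by
          gcongr
          exact hgj.trans (by gcongr)
      _ = _ := by ring
  have hlim : Tendsto (fun k : ℕ ↦ C * ((k : ℝ) + 1) ^ m * r ^ k) atTop (𝓝 0) := by
    rcases hr0.eq_or_lt with h0 | h0
    · refine tendsto_const_nhds.congr' ?_
      filter_upwards [eventually_ne_atTop 0] with k hk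
      simp [← h0, hk]
    have h := ((tendsto_pow_const_mul_const_pow_of_abs_lt_one m
      (by rwa [abs_of_nonneg hr0])).comp (tendsto_add_atTop_nat 1)).const_mul (C * r⁻¹)
    rw [mul_zero] at h
    refine h.congr fun k ↦ ?_
    simp only [Function.comp_apply, pow_succ r, Nat.cast_add, Nat.cast_one]
    field_simp
  obtain ⟨k, hk⟩ := (hlim.eventually_lt_const one_pos).exists
  exact isUnit_of_dvd_unit (one_sub_dvd_one_sub_pow f k)
    (isUnit_one_sub_of_norm_lt_one ((hbound k).trans_lt hk))

/-- The arithmetic function with Dirichlet series `s ↦ ∑ f n * n ^ (-(s + σ))`. -/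
def shift (f : 𝒜) (σ : NNReal) : 𝒜 :=
  ⟨⟨term f.1 (σ : ℝ), term_zero ..⟩, (ArithmeticFunction.lseriesSummable_zero_iff _).mpr <|
    lseriesSummable f (by simp)⟩

lemma shift_apply (f : 𝒜) (σ : NNReal) (n : ℕ) : (shift f σ).1 n = term f.1 (σ : ℝ) n := rfl

lemma norm_shift_apply_le (f : 𝒜) (σ : NNReal) (n : ℕ) : ‖(shift f σ).1 n‖ ≤ ‖f.1 n‖ := by
  simpa [shift_apply, f.1.term_zero_right] using norm_term_le_of_re_le_re f.1 (s := 0) (s' := (σ : ℝ))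
    (by simp) n

lemma shift_zero (f : 𝒜) : shift f 0 = f := by
  refine Subtype.ext (ArithmeticFunction.ext fun n ↦ ?_)
  simp [shift_apply, f.1.term_zero_right]

lemma lseries_shift (f : 𝒜) (σ : NNReal) (s : ℂ) :
    LSeries (shift f σ).1 s = LSeries f.1 (s + (σ : ℝ)) := by
  refine tsum_congr fun n ↦ ?_
  rcases eq_or_ne n 0 with rfl | hn
  · simp
  · rw [term_of_ne_zero hn, term_of_ne_zero hn, shift_apply, term_of_ne_zero hn, div_div,
      add_comm, Complex.cpow_add _ _ (by exact_mod_cast hn)]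

/-- Dominated convergence in `ℓ¹`. -/
lemma tendsto_of_dominated {ι : Type*} {l : Filter ι} (u : ι → 𝒜) (g : 𝒜) {bound : ℕ → ℝ}
    (hb : Summable bound) (hu : ∀ i n, ‖(u i).1 n‖ ≤ bound n) (hg : ∀ n, ‖g.1 n‖ ≤ bound n)
    (h : ∀ n, Tendsto (fun i ↦ (u i).1 n) l (𝓝 (g.1 n))) : Tendsto u l (𝓝 g) := by
  rw [tendsto_iff_norm_sub_tendsto_zero]
  simp only [norm_eq_tsum]
  rw [← tsum_zero (β := ℕ)]
  refine tendsto_tsum_of_dominated_convergence (bound := fun n ↦ bound n + bound n) (hb.add hb)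
    (fun n ↦ tendsto_iff_norm_sub_tendsto_zero.mp (h n)) (.of_forall fun i n ↦ ?_)
  rw [norm_norm]
  exact (norm_sub_le _ _).trans (add_le_add (hu i n) (hg n))

lemma continuous_shift (f : 𝒜) : Continuous (shift f) := by
  refine continuous_iff_continuousAt.mpr fun σ ↦ tendsto_of_dominated _ _ (summable_norm f)
    (norm_shift_apply_le f) (norm_shift_apply_le f σ) fun n ↦ ?_
  rcases eq_or_ne n 0 with rfl | hn
  · simp
  · simp only [shift_apply, term_of_ne_zero hn]
    have hn' : (n : ℂ) ≠ 0 := by exact_mod_cast hn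
    have : Continuous fun x : NNReal ↦ f.1 n / (n : ℂ) ^ (((x : ℝ) : ℂ)) := by
      refine continuous_const.div ?_ fun x ↦ by simp [Complex.cpow_eq_zero_iff, hn']
      exact (Complex.continuous_ofReal.comp NNReal.continuous_coe).const_cpow (.inl hn')
    exact this.tendsto σ

/-- For large `σ` the shift of `f` is close to `f 1` times the identity, hence invertible. -/
lemma exists_isUnit_shift (f : 𝒜) (hf : f.1 1 ≠ 0) : ∃ σ, IsUnit (shift f σ) := by
  let e (c : ℂ) : 𝒜 := ⟨⟨fun n ↦ if n = 1 then c else 0, by simp⟩,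
    (ArithmeticFunction.lseriesSummable_zero_iff _).mpr <|
      summable_of_ne_finset_zero (s := {1}) fun n hn ↦ if_neg (by simpa using hn)⟩
  have he (c : ℂ) (n : ℕ) : (e c).1 n = if n = 1 then c else 0 := rfl
  have hunit : IsUnit (e (f.1 1)) := by
    refine IsUnit.of_mul_eq_one (e (f.1 1)⁻¹) (Subtype.ext (ArithmeticFunction.ext fun n ↦ ?_))
    change ((e (f.1 1)).1 * (e (f.1 1)⁻¹).1) n = (1 : ArithmeticFunction ℂ) n
    rw [ArithmeticFunction.mul_apply, ArithmeticFunction.one_apply]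
    split_ifs with h
    · subst h
      simp [he, hf]
    · refine Finset.sum_eq_zero fun p hp ↦ ?_
      rw [he, he]
      by_cases h1 : p.1 = 1
      · have h2 : p.2 ≠ 1 := fun h2 ↦ h (by rw [← (Nat.mem_divisorsAntidiagonal.mp hp).1, h1, h2])
        simp [h2]
      · simp [h1]
  have hlim : Tendsto (shift f) atTop (𝓝 (e (f.1 1))) := by
    refine tendsto_of_dominated _ _ (summable_norm f) (norm_shift_apply_le f) (fun n ↦ ?_)
      fun n ↦ ?_
    · rw [he]
      split_ifs with h <;> simp [h]
    · rw [he]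
      simp only [shift_apply]
      split_ifs with h
      · subst h
        simp [term_of_ne_zero]
      · rcases eq_or_ne n 0 with rfl | hn
        · simp
        have hn1 : (1 : ℝ) < n := by exact_mod_cast (Nat.one_lt_iff_ne_zero_and_ne_one.mpr ⟨hn, h⟩)
        rw [tendsto_zero_iff_norm_tendsto_zero]
        simp only [norm_term_eq, if_neg hn, Complex.ofReal_re]
        exact ((tendsto_rpow_atTop_of_base_gt_one _ hn1).comp
          (NNReal.tendsto_coe_atTop.mpr tendsto_id)).const_div_atTop _
  exact (hlim.eventually (Units.isOpen.mem_nhds hunit)).exists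

/-- If `g` is close to an invertible `f` relative to a lower bound for the Dirichlet series of `f`
on the imaginary axis, then `g` is invertible. -/
lemma isUnit_of_norm_sub_lt {f g : 𝒜} {ε : ℝ} (hf : IsUnit f) (hε : 0 < ε)
    (hlow : ∀ t : ℝ, ε ≤ ‖LSeries f.1 (t * Complex.I)‖) (hfg : ‖f - g‖ < ε) : IsUnit g := by
  obtain ⟨b, hb⟩ := hf.exists_right_inv
  have hg : g = f * (1 - b * (f - g)) := by
    linear_combination (f - g) * hb
  rw [hg]
  refine hf.mul (isUnit_one_sub_of_lseries_le _ (M := ε⁻¹ * ‖f - g‖) ?_ fun t ↦ ?_)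
  · rwa [inv_mul_lt_one₀ hε]
  · have hre : 0 ≤ (t * Complex.I).re := by simp
    have h1 := congrArg norm (lseries_one (t * Complex.I))
    rw [← hb, lseries_mul f b hre, norm_mul, norm_one] at h1
    rw [lseries_mul _ _ hre, norm_mul]
    refine mul_le_mul ?_ (norm_lseries_le _ hre) (norm_nonneg _) (by positivity)
    rw [eq_inv_of_mul_eq_one_right h1]
    exact inv_anti₀ hε (hlow t)

/-- An element of `ℓ¹` with `f 1 ≠ 0` whose Dirichlet series is bounded away from zero on the closed
right half-plane is invertible in `ℓ¹`. -/
theorem isUnit_of_le_norm_lseries (f : 𝒜) {ε : ℝ} (hf : f.1 1 ≠ 0) (hε : 0 < ε)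
    (hlow : ∀ s : ℂ, 0 ≤ s.re → ε ≤ ‖LSeries f.1 s‖) : IsUnit f := by
  have hshift (σ : NNReal) (t : ℝ) : ε ≤ ‖LSeries (shift f σ).1 (t * Complex.I)‖ := by
    rw [lseries_shift]
    exact hlow _ (by simp)
  have hnear (σ : NNReal) : ∀ᶠ τ in 𝓝 σ, ‖shift f τ - shift f σ‖ < ε := by
    have := (continuous_shift f).tendsto σ
    exact (tendsto_iff_norm_sub_tendsto_zero.mp this).eventually_lt_const hε
  have hclopen : IsClopen {σ | IsUnit (shift f σ)} := by
    constructor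
    · refine isClosed_iff_frequently.mpr fun σ hσ ↦ ?_
      obtain ⟨τ, hτ, h⟩ := (hσ.and_eventually (hnear σ)).exists
      exact isUnit_of_norm_sub_lt hτ hε (hshift τ) h
    · exact Units.isOpen.preimage (continuous_shift f)
  have huniv := hclopen.eq_univ (exists_isUnit_shift f hf)
  have h0 : (0 : NNReal) ∈ {σ | IsUnit (shift f σ)} := huniv ▸ Set.mem_univ _
  rwa [Set.mem_ofPred_eq, shift_zero] at h0

end summableArithmeticFunction

/-- The L-series of `f` as a sum over `n + 1`. -/
lemma tsum_div_succ_cpow_eq_lseries (f : ℕ → ℂ) (s : ℂ) :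
    ∑' n : ℕ, f (n + 1) / ((n : ℂ) + 1) ^ s = LSeries f s := by
  have hinj : Function.Injective (fun n : ℕ ↦ n + 1) := add_left_injective 1
  rw [LSeries, ← hinj.tsum_eq (f := term f s)]
  · refine tsum_congr fun n ↦ ?_
    simp [term_of_ne_zero]
  · intro n hn
    have hn0 : n ≠ 0 := by
      rintro rfl
      exact hn (term_zero f s)
    exact ⟨n - 1, Nat.succ_pred_eq_of_ne_zero hn0⟩

end

/-- Hewitt–Williamson: an absolutely convergent Dirichlet series `f(s) = ∑ aₙ n^{-s}` with
`a₁ ≠ 0` which is bounded below by `δ > 0` in modulus on `Re s ≥ 0` has an absolutely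
convergent Dirichlet series reciprocal there. -/
theorem hewitt_williamson (a : ℕ → ℂ) (δ : ℝ)
    (ha : Summable fun n : ℕ => ‖a (n + 1)‖) (ha1 : a 1 ≠ 0) (hδ : 0 < δ)
    (hlow : ∀ s : ℂ, 0 ≤ s.re → δ ≤ ‖∑' n : ℕ, a (n + 1) / ((n : ℂ) + 1) ^ s‖) :
    ∃ b : ℕ → ℂ, (Summable fun n : ℕ => ‖b (n + 1)‖) ∧
      ∀ s : ℂ, 0 ≤ s.re →
        (∑' n : ℕ, b (n + 1) / ((n : ℂ) + 1) ^ s) =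
          (∑' n : ℕ, a (n + 1) / ((n : ℂ) + 1) ^ s)⁻¹ := by
  let f : summableArithmeticFunction := ⟨toArithmeticFunction a,
    (ArithmeticFunction.lseriesSummable_zero_iff _).mpr <|
      (summable_nat_add_iff 1).mp (by simpa [toArithmeticFunction] using ha.of_norm)⟩
  have hfa (n : ℕ) (hn : n ≠ 0) : f.1 n = a n := if_neg hn
  have hL (s : ℂ) : LSeries f.1 s = ∑' n : ℕ, a (n + 1) / ((n : ℂ) + 1) ^ s := by
    rw [tsum_div_succ_cpow_eq_lseries]
    exact LSeries_congr (fun {n} hn ↦ hfa n hn) s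
  obtain ⟨b, hb⟩ := (summableArithmeticFunction.isUnit_of_le_norm_lseries f
    (by rwa [hfa 1 one_ne_zero]) hδ fun s hs ↦ by rw [hL]; exact hlow s hs).exists_right_inv
  refine ⟨b.1, (summable_nat_add_iff 1).mpr (summableArithmeticFunction.summable_norm b),
    fun s hs ↦ ?_⟩
  rw [tsum_div_succ_cpow_eq_lseries, ← hL]
  refine eq_inv_of_mul_eq_one_right ?_
  rw [← summableArithmeticFunction.lseries_mul f b hs, hb, summableArithmeticFunction.lseries_one]
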